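/- Let X be a metric space, D a chained entourage in X, and E ⊆ D an entourage. Suppose α and β are E-chains with the same endpoints and there is a D-homotopy from α to β (regarding them as D-chains). Then β is E-homotopic to a concatenation λ_1*…*λ_r*α*λ_{r+1}*…*λ_n, where each λ_i is an E-refinement of a D-small loop. -/

import Mathlib

open Filter Metric Set
open scoped ENNReal NNReal Topology

variable {X : Type*} [MetricSpace X]

/-- The metric entourage of size `ε`: pairs at distance less than `ε`. -/
def MetricEnt (X : Type*) [MetricSpace X] (ε : ℝ) : Set (X × X) :=
  {p | dist p.1 p.2 < ε}

/-- An entourage in a metric space: a symmetric subset of `X × X` containing some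
metric entourage `E_ε`. -/
def IsEntourage (E : Set (X × X)) : Prop :=
  (∀ p : X × X, p ∈ E → (p.2, p.1) ∈ E) ∧ ∃ ε > 0, MetricEnt X ε ⊆ E

/-- The `E`-ball about `x`: `B(x,E) = {y | (x,y) ∈ E}`. -/
def EBall (E : Set (X × X)) (x : X) : Set X := {y | (x, y) ∈ E}

/-- An `E`-chain: a nonempty finite sequence of points with all consecutive pairs in `E`. -/
def IsEChain (E : Set (X × X)) (l : List X) : Prop :=
  l ≠ [] ∧ l.Chain' (fun a b => (a, b) ∈ E)

/-- Concatenation of two chains sharing an endpoint (the last point of `α` should be the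
first point of `β`). -/
def chainConc (α β : List X) : List X := α ++ β.tail

/-- The length `L(α)` of a chain: the sum of the distances between consecutive points. -/
noncomputable def chainLength : List X → ℝ
  | [] => 0
  | [_] => 0
  | a :: b :: rest => dist a b + chainLength (b :: rest)

/-- A basic move of an `E`-homotopy: inserting a point between two consecutive points
(legal when both new pairs lie in `E`), or removing an interior point (legal when the
resulting consecutive pair lies in `E`).  Endpoints are never changed. -/
inductive EStep (E : Set (X × X)) : List X → List X → Prop
  | insert (pre : List X) (a x b : X) (post : List X)
      (h1 : (a, x) ∈ E) (h2 : (x, b) ∈ E) :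
      EStep E (pre ++ a :: b :: post) (pre ++ a :: x :: b :: post)
  | remove (pre : List X) (a x b : X) (post : List X)
      (h : (a, b) ∈ E) :
      EStep E (pre ++ a :: x :: b :: post) (pre ++ a :: b :: post)

/-- Two chains are `E`-homotopic if one passes from one to the other by finitely many
basic moves. -/
def EHomotopic (E : Set (X × X)) : List X → List X → Prop :=
  Relation.ReflTransGen (EStep E)

/-- Two `E`-loops `l₁`, `l₂` are freely `E`-homotopic if there are `E`-chains `α`, `β`
from a common point to their respective basepoints such that the corresponding
conjugated loops are `E`-homotopic. -/
def FreelyEHomotopic (E : Set (X × X)) (l₁ l₂ : List X) : Prop :=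
  ∃ α β : List X, IsEChain E α ∧ IsEChain E β ∧ α.head? = β.head? ∧
    α.getLast? = l₁.head? ∧ β.getLast? = l₂.head? ∧
    EHomotopic E (chainConc (chainConc α l₁) α.reverse)
      (chainConc (chainConc β l₂) β.reverse)

/-- A subset `A` is chain connected if for every `δ > 0` any two points of `A` are joined
by a `δ`-chain lying in `A`. -/
def ChainConnected (A : Set X) : Prop :=
  ∀ δ > 0, ∀ x ∈ A, ∀ y ∈ A, ∃ l : List X, IsEChain (MetricEnt X δ) l ∧
    (∀ z ∈ l, z ∈ A) ∧ l.head? = some x ∧ l.getLast? = some y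

/-- A chained entourage: an entourage contained in the closure of its interior, this
closure being compact if the space is not, such that any pair `(x,y) ∈ E` may be joined
by arbitrarily fine chains inside `B(x,E) ∩ B(y,E)`. -/
def IsChained (E : Set (X × X)) : Prop :=
  IsEntourage E ∧ E ⊆ closure (interior E) ∧
  (¬ CompactSpace X → IsCompact (closure (interior E))) ∧
  ∀ p ∈ E, ∀ δ > 0, ∃ l : List X, IsEChain (MetricEnt X δ) l ∧
    l.head? = some p.1 ∧ l.getLast? = some p.2 ∧
    ∀ z ∈ l, z ∈ EBall E p.1 ∩ EBall E p.2

/-- An `F`-refinement of a `D`-chain: between each pair of consecutive points `x`, `y` of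
the original chain insert an `F`-chain from `x` to `y` lying in `B(x,D) ∩ B(y,D)`. -/
inductive IsRefinement (D F : Set (X × X)) : List X → List X → Prop
  | single (x : X) : IsRefinement D F [x] [x]
  | cons (x y : X) (seg rest refRest : List X)
      (hseg : IsEChain F (x :: (seg ++ [y])))
      (hin : ∀ z ∈ x :: (seg ++ [y]), z ∈ EBall D x ∩ EBall D y)
      (hrest : IsRefinement D F (y :: rest) refRest) :
      IsRefinement D F (x :: y :: rest) (x :: (seg ++ refRest))

/-- An `E`-subdivision of a curve `c` (regarded on `[0,1]`): an `E`-chain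
`{c(t₀),…,c(tₙ)}` with `0 = t₀ ≤ ⋯ ≤ tₙ = 1` such that the restriction of `c` to each
`[tᵢ,tᵢ₊₁]` lies in `B(c(tᵢ),E) ∩ B(c(tᵢ₊₁),E)`. -/
def IsSubdivision (E : Set (X × X)) (c : ℝ → X) (l : List X) : Prop :=
  ∃ ts : List ℝ, ts.head? = some 0 ∧ ts.getLast? = some 1 ∧
    l = ts.map c ∧ IsEChain E l ∧
    ts.Chain' (fun a b => a ≤ b ∧ ∀ s, a ≤ s → s ≤ b →
      c s ∈ EBall E (c a) ∩ EBall E (c b))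

/-- `c` is a stringing of the chain `l` iff `c` is a curve on `[0,1]` of which `l` is an
`E`-subdivision. -/
def IsStringing (E : Set (X × X)) (l : List X) (c : ℝ → X) : Prop :=
  ContinuousOn c (Set.Icc 0 1) ∧ IsSubdivision E c l

/-- Two curves with the same endpoints are `E`-homotopic if they admit `E`-homotopic
`E`-subdivisions. -/
def CurveEHomotopic (E : Set (X × X)) (c₁ c₂ : ℝ → X) : Prop :=
  ∃ l₁ l₂ : List X, IsSubdivision E c₁ l₁ ∧ IsSubdivision E c₂ l₂ ∧ EHomotopic E l₁ l₂

/-- Two closed curves are freely `E`-homotopic if they admit freely `E`-homotopic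
`E`-subdivisions. -/
def CurveFreelyEHomotopic (E : Set (X × X)) (c₁ c₂ : ℝ → X) : Prop :=
  ∃ l₁ l₂ : List X, IsSubdivision E c₁ l₁ ∧ IsSubdivision E c₂ l₂ ∧ FreelyEHomotopic E l₁ l₂

/-- A `D`-small loop: a `D`-loop of the form `γ * τ * γ̄` where `τ` is a `D`-loop with
exactly three edges. -/
def IsSmallLoop (D : Set (X × X)) (l : List X) : Prop :=
  ∃ (γ : List X) (a b c : X), IsEChain D γ ∧ γ.getLast? = some a ∧
    (a, b) ∈ D ∧ (b, c) ∈ D ∧ (c, a) ∈ D ∧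
    l = chainConc (chainConc γ [a, b, c, a]) γ.reverse

/-- `C(X,ε)`: the minimal number of open `ε`-balls needed to cover `X`. -/
noncomputable def coveringNumber (X : Type*) [MetricSpace X] (ε : ℝ) : ℕ :=
  sInf {n : ℕ | ∃ s : Finset X, s.card = n ∧ (⋃ x ∈ s, Metric.ball x ε) = Set.univ}

/-- A geodesic space: any two points are joined by a curve whose length (total
variation) equals the distance between them. -/
def IsGeodesicSpace (X : Type*) [MetricSpace X] : Prop :=
  ∀ x y : X, ∃ f : ℝ → X, ContinuousOn f (Set.Icc 0 1) ∧ f 0 = x ∧ f 1 = y ∧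
    eVariationOn f (Set.Icc 0 1) = ENNReal.ofReal (dist x y)

/-- Fixed-endpoint path homotopy of two curves on `[0,1]`. -/
def PathHomotopicOn (f g : ℝ → X) : Prop :=
  ∃ H : ℝ × ℝ → X, ContinuousOn H (Set.Icc 0 1 ×ˢ Set.Icc 0 1) ∧
    (∀ t ∈ Set.Icc (0:ℝ) 1, H (0, t) = f t ∧ H (1, t) = g t) ∧
    (∀ s ∈ Set.Icc (0:ℝ) 1, H (s, 0) = f 0 ∧ H (s, 1) = f 1)

/-- Concatenation of a list of chains (each sharing its endpoint with the next). -/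
def concList : List (List X) → List X
  | [] => []
  | [l] => l
  | l :: l' :: ls => chainConc l (concList (l' :: ls))

/-- Concatenation of two curves on `[0,1]`. -/
noncomputable def concat2 (f g : ℝ → X) : ℝ → X :=
  fun t => if t ≤ 1 / 2 then f (2 * t) else g (2 * t - 1)

/-- Concatenation of a finite list of loops based at `p`. -/
noncomputable def concatLoops (p : X) : List (ℝ → X) → ℝ → X
  | [] => fun _ => p
  | [f] => f
  | f :: g :: fs => concat2 f (concatLoops p (g :: fs))

/-- A curve on `[0,1]` is parameterized proportional to arclength. -/
def PropToArclength (c : ℝ → X) : Prop :=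
  ∀ t ∈ Set.Icc (0:ℝ) 1, eVariationOn c (Set.Icc 0 t) =
    ENNReal.ofReal t * eVariationOn c (Set.Icc 0 1)

/-- A closed curve (parameterized on `[0,1]` proportional to arclength) is a closed
`κ`-geodesic if every subarc of its periodic extension of length at most `κ` has length
equal to the distance between its endpoints. -/
def IsClosedKGeodesic (c : ℝ → X) (κ : ℝ) : Prop :=
  c 0 = c 1 ∧
  ∀ s t : ℝ, s ≤ t →
    eVariationOn (fun u => c (Int.fract u)) (Set.Icc s t) ≤ ENNReal.ofReal κ →
    eVariationOn (fun u => c (Int.fract u)) (Set.Icc s t) =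
      ENNReal.ofReal (dist (c (Int.fract s)) (c (Int.fract t)))
section Helpers

def refChain (seg : X → X → List X) : List X → List X
  | [] => []
  | [x] => [x]
  | x :: y :: l => x :: (seg x y ++ refChain seg (y :: l))

theorem exists_seg (D E : Set (X × X)) (hD : IsChained D)
    (hE : IsEntourage E) (hED : E ⊆ D) :
    ∃ seg : X → X → List X, (∀ x y, seg y x = (seg x y).reverse) ∧
      (∀ x y, (x, y) ∈ E → seg x y = []) ∧
      (∀ x y, (x, y) ∈ D → IsEChain E (x :: (seg x y ++ [y])) ∧
        ∀ z ∈ x :: (seg x y ++ [y]), z ∈ EBall D x ∩ EBall D y) := by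
  classical
  obtain ⟨hEs, ε, hε, hεE⟩ := hE
  obtain ⟨⟨hDs, η, hη, hηD⟩, -, -, hch⟩ := hD
  have hdE : ∀ x, (x, x) ∈ E := fun x => hεE (by simpa [MetricEnt] using hε)
  have key : ∀ x y, ∃ s : List X, (x, y) ∈ D → (x, y) ∉ E →
      IsEChain E (x :: (s ++ [y])) ∧
        ∀ z ∈ x :: (s ++ [y]), z ∈ EBall D x ∩ EBall D y := by
    intro x y
    by_cases h : (x, y) ∈ D ∧ (x, y) ∉ E
    · obtain ⟨l, ⟨hl0, hl⟩, h1, h2, h3⟩ := hch (x, y) h.1 ε hε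
      have hxy : x ≠ y := by
        rintro rfl
        exact h.2 (hdE x)
      obtain ⟨s, rfl⟩ : ∃ s, l = x :: (s ++ [y]) := by
        cases l with
        | nil => simp at h1
        | cons a t =>
          simp only [List.head?_cons, Option.some.injEq] at h1
          subst h1
          rcases List.eq_nil_or_concat t with rfl | ⟨s, b, rfl⟩
          · simp at h2
            exact absurd h2 hxy
          · refine ⟨s, ?_⟩
            rw [List.concat_eq_append, ← List.cons_append, List.getLast?_append] at h2
            simp at h2
            simp [h2]
      exact ⟨s, fun _ _ => ⟨⟨by simp, List.IsChain.imp (fun a b hab => hεE hab) hl⟩, h3⟩⟩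
    · exact ⟨[], fun h1 h2 => absurd ⟨h1, h2⟩ h⟩
  choose f hf using key
  refine ⟨fun x y => if (x, y) ∈ E then [] else
    if WellOrderingRel x y then f x y else (f y x).reverse, ?_, ?_, ?_⟩
  · intro x y
    by_cases h : (x, y) ∈ E
    · have h' : (y, x) ∈ E := hEs _ h
      simp [h, h']
    · have h' : (y, x) ∉ E := fun h' => h (hEs _ h')
      have hxy : x ≠ y := by
        rintro rfl
        exact h (hdE x)
      rcases trichotomous_of (WellOrderingRel (α := X)) x y with h1 | h1 | h1
      · have h2 : ¬ WellOrderingRel y x := fun h2 => asymm h1 h2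
        simp [h, h', h1, h2]
      · exact absurd h1 hxy
      · have h2 : ¬ WellOrderingRel x y := fun h2 => asymm h1 h2
        simp [h, h', h1, h2]
  · intro x y h
    simp [h]
  · intro x y h
    have hDd : ∀ x, (x, x) ∈ D := fun x => hED (hdE x)
    have h' : (y, x) ∈ D := hDs _ h
    by_cases hxE : (x, y) ∈ E
    · simp [hxE, IsEChain, List.Chain', EBall, h, h', hDd]
    · have hxE' : (y, x) ∉ E := fun h' => hxE (hEs _ h')
      by_cases hw : WellOrderingRel x y
      · simpa only [hxE, hw, if_true, if_false] using hf x y h hxE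
      · simp only [hxE, hw, if_false]
        obtain ⟨⟨-, h1⟩, h2⟩ := hf y x h' hxE'
        have hrev : x :: ((f y x).reverse ++ [y]) = (y :: (f y x ++ [x])).reverse := by simp
        rw [hrev]
        refine ⟨⟨by simp, ?_⟩, ?_⟩
        · exact List.isChain_reverse.2 (List.IsChain.imp (fun a b hab => hEs _ hab) h1)
        · intro z hz
          exact (h2 z (List.mem_reverse.1 hz)).symm

variable {seg : X → X → List X}

theorem ref_append (l : List X) (b : X) (q : List X) :
    refChain seg (l ++ b :: q) = refChain seg (l ++ [b]) ++ (refChain seg (b :: q)).tail := by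
  induction l with
  | nil => cases q <;> simp [refChain]
  | cons x l ih =>
    cases l with
    | nil => 
      simp only [List.cons_append, List.nil_append, refChain]
      simp only [List.nil_append] at ih
      rw [ih]; simp [refChain]
    | cons y l =>
      simp only [List.cons_append, refChain] at ih ⊢
      rw [ih]; simp

theorem ref_head (l : List X) : (refChain seg l).head? = l.head? := by
  rcases l with _ | ⟨x, _ | ⟨y, l⟩⟩ <;> simp [refChain]

theorem ref_reverse (hs : ∀ x y, seg y x = (seg x y).reverse) (l : List X) :
    refChain seg l.reverse = (refChain seg l).reverse := by
  induction l with
  | nil => simp [refChain]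
  | cons x l ih =>
    cases l with
    | nil => simp [refChain]
    | cons y l =>
      have : (x :: y :: l).reverse = l.reverse ++ y :: [x] := by simp
      rw [this, ref_append]
      have h2 : l.reverse ++ [y] = (y :: l).reverse := by simp
      rw [h2, ih]
      simp [refChain, hs x y]

theorem ref_last (hs : ∀ x y, seg y x = (seg x y).reverse) (l : List X) :
    (refChain seg l).getLast? = l.getLast? := by
  rw [← List.head?_reverse, ← ref_reverse hs, ref_head, List.head?_reverse]

theorem ref_self {E : Set (X × X)} (h : ∀ x y, (x, y) ∈ E → seg x y = []) (l : List X)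
    (hl : l.IsChain (fun a b => (a, b) ∈ E)) : refChain seg l = l := by
  induction l with
  | nil => rfl
  | cons x l ih =>
    cases l with
    | nil => rfl
    | cons y l =>
      rw [List.isChain_cons_cons] at hl
      simp [refChain, h x y hl.1, ih hl.2]

theorem ref_isRef {D E : Set (X × X)}
    (h : ∀ x y, (x, y) ∈ D → IsEChain E (x :: (seg x y ++ [y])) ∧
        ∀ z ∈ x :: (seg x y ++ [y]), z ∈ EBall D x ∩ EBall D y) (l : List X)
    (hl : IsEChain D l) : IsRefinement D E l (refChain seg l) := by
  obtain ⟨h0, hl⟩ := hl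
  induction l with
  | nil => exact absurd rfl h0
  | cons x l ih =>
    cases l with
    | nil => exact .single x
    | cons y l =>
      replace hl := List.isChain_cons_cons.1 hl
      exact .cons x y _ _ _ (h x y hl.1).1 (h x y hl.1).2 (ih (by simp) hl.2)

theorem ref_isChain {D E : Set (X × X)}
    (h : ∀ x y, (x, y) ∈ D → IsEChain E (x :: (seg x y ++ [y])) ∧
        ∀ z ∈ x :: (seg x y ++ [y]), z ∈ EBall D x ∩ EBall D y) (l : List X)
    (hl : IsEChain D l) : IsEChain E (refChain seg l) := by
  obtain ⟨h0, hl⟩ := hl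
  induction l with
  | nil => exact absurd rfl h0
  | cons x l ih =>
    cases l with
    | nil => simp [IsEChain, List.Chain', refChain]
    | cons y l =>
      replace hl := List.isChain_cons_cons.1 hl
      obtain ⟨t, ht⟩ : ∃ t, refChain seg (y :: l) = y :: t := by
        cases l <;> simp [refChain]
      have h2 := (ih (by simp) hl.2).2
      have h1 := (h x y hl.1).1.2
      refine ⟨by simp [refChain], ?_⟩
      simp only [refChain]
      rw [ht] at h2 ⊢
      have h3 : List.IsChain (fun a b => (a, b) ∈ E) ((x :: seg x y) ++ y :: t) :=
        List.isChain_split.2 ⟨h1, h2⟩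
      exact h3

theorem EStep.ctx {E : Set (X × X)} {l l' : List X} (p : List X) (h : EStep E l l') :
    EStep E (p ++ l) (p ++ l') := by
  cases h with
  | insert pre a x b post h1 h2 =>
    simpa using EStep.insert (p ++ pre) a x b post h1 h2
  | remove pre a x b post h =>
    simpa using EStep.remove (p ++ pre) a x b post h

theorem EHomotopic.ctx {E : Set (X × X)} {l l' : List X} (p : List X) (h : EHomotopic E l l') :
    EHomotopic E (p ++ l) (p ++ l') :=
  by
  induction h with
  | refl => exact Relation.ReflTransGen.refl
  | tail _ h ih => exact Relation.ReflTransGen.tail ih (h.ctx p)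

theorem EStep.head {E : Set (X × X)} {l l' : List X} (h : EStep E l l') :
    l.head? = l'.head? := by
  cases h with
  | insert pre a x b post h1 h2 => cases pre <;> simp
  | remove pre a x b post h => cases pre <;> simp

theorem EHomotopic.head {E : Set (X × X)} {l l' : List X} (h : EHomotopic E l l') :
    l.head? = l'.head? := by
  induction h with
  | refl => rfl
  | tail _ h ih => rw [ih, h.head]

theorem spur {E : Set (X × X)} (hE : IsEntourage E) (w : List X) :
    ∀ (V : List X) (y b : X) (Q : List X), (y, b) ∈ E →
      (b :: w).IsChain (fun a b => (a, b) ∈ E) →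
      EHomotopic E (V ++ y :: b :: Q) (V ++ y :: b :: (w ++ ((b :: w).reverse.tail ++ Q))) := by
  obtain ⟨hEs, ε, hε, hεE⟩ := hE
  have hdE : ∀ x, (x, x) ∈ E := fun x => hεE (by simpa [MetricEnt] using hε)
  induction w with
  | nil => intro V y b Q _ _; simpa [EHomotopic] using Relation.ReflTransGen.refl
  | cons x w ih =>
    intro V y b Q hyb hc
    rw [List.isChain_cons_cons] at hc
    have s1 : EStep E (V ++ y :: b :: Q) (V ++ y :: b :: b :: Q) :=
      EStep.insert V y b b Q hyb (hdE b)
    have s2 : EStep E (V ++ y :: b :: b :: Q) (V ++ y :: b :: x :: b :: Q) := by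
      simpa using EStep.insert (V ++ [y]) b x b Q hc.1 (hEs _ hc.1)
    have s3 := ih (V ++ [y]) b x (b :: Q) hc.1 hc.2
    have e : (b :: x :: w).reverse.tail = (x :: w).reverse.tail ++ [b] := by
      rw [List.reverse_cons, List.tail_append_of_ne_nil (by simp)]
    rw [e]
    refine (Relation.ReflTransGen.single s1).trans ((Relation.ReflTransGen.single s2).trans ?_)
    simpa [EHomotopic] using s3

theorem spur' {E : Set (X × X)} (hE : IsEntourage E) (U V Q : List X) (b : X)
    (hU : IsEChain E U) (hV : IsEChain E V) (hUl : U.getLast? = some b)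
    (hVl : V.getLast? = some b) (hV2 : 2 ≤ V.length) :
    EHomotopic E (V ++ Q) ((V ++ U.reverse.tail) ++ (U ++ Q).tail) := by
  obtain ⟨V1, rfl⟩ := List.getLast?_eq_some_iff.1 hVl
  rcases List.eq_nil_or_concat V1 with rfl | ⟨V0, y, rfl⟩
  · simp at hV2
  obtain ⟨W, rfl⟩ := List.getLast?_eq_some_iff.1 hUl
  have hyb : (y, b) ∈ E := by
    have := hV.2
    simp only [List.concat_eq_append, List.append_assoc, List.cons_append, List.nil_append] at this
    have h2 := (List.isChain_split.1 this).2
    exact (List.isChain_cons_cons.1 h2).1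
  have hc : (b :: W.reverse).IsChain (fun a b => (a, b) ∈ E) := by
    have h3 : b :: W.reverse = (W ++ [b]).reverse := by simp
    rw [h3]
    exact List.isChain_reverse.2 (List.IsChain.imp (fun a b hab => hE.1 _ hab) hU.2)
  have := spur hE W.reverse V0 y b Q hyb hc
  rw [List.tail_append_of_ne_nil (by simp)]
  simpa using this

theorem concList_cons (l : List X) (ls : List (List X)) (h : ls ≠ []) :
    concList (l :: ls) = chainConc l (concList ls) := by
  cases ls with
  | nil => exact absurd rfl h
  | cons a t => rfl

/-- core step -/
theorem core_step {D E : Set (X × X)} (hE : IsEntourage E)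
    (hs : ∀ x y, seg y x = (seg x y).reverse)
    (h : ∀ x y, (x, y) ∈ D → IsEChain E (x :: (seg x y ++ [y])) ∧
        ∀ z ∈ x :: (seg x y ++ [y]), z ∈ EBall D x ∩ EBall D y)
    (hDs : ∀ p : X × X, p ∈ D → (p.2, p.1) ∈ D)
    (u v : List X) (b : X) (post : List X)
    (hu : IsEChain D (u ++ [b])) (hv : IsEChain D (v ++ [b])) (hv0 : v ≠ [])
    (hhd : (u ++ [b]).head? = (v ++ [b]).head?)
    (hsm : IsSmallLoop D (v ++ b :: u.reverse))
    (α : List X) (ls : List (List X))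
    (hom : EHomotopic E (refChain seg (u ++ b :: post)) (concList (ls ++ [α]))) :
    ∃ l, (IsEChain E l ∧ ∃ s : List X, IsSmallLoop D s ∧ IsRefinement D E s l) ∧
      l.head? = (u ++ [b]).head? ∧ l.getLast? = (u ++ [b]).head? ∧
      EHomotopic E (refChain seg (v ++ b :: post)) (concList ((l :: ls) ++ [α])) := by
  have hrev : b :: u.reverse = (u ++ [b]).reverse := by simp
  have hR : refChain seg (v ++ b :: u.reverse) =
      refChain seg (v ++ [b]) ++ (refChain seg (u ++ [b])).reverse.tail := by
    rw [ref_append, hrev, ref_reverse hs]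
  have hsc : IsEChain D (v ++ b :: u.reverse) := by
    refine ⟨by simp, List.isChain_split.2 ⟨hv.2, ?_⟩⟩
    rw [hrev]
    exact List.isChain_reverse.2 (List.IsChain.imp (fun a b hab => hDs _ hab) hu.2)
  have hlast : (refChain seg (v ++ b :: u.reverse)).getLast? = (u ++ [b]).head? := by
    rw [ref_last hs, List.getLast?_append, hrev, List.getLast?_reverse]
    cases u <;> simp
  refine ⟨refChain seg (v ++ b :: u.reverse), ⟨ref_isChain h _ hsc, _, hsm, ref_isRef h _ hsc⟩,
    ?_, hlast, ?_⟩
  · rw [ref_head, hhd]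
    cases v <;> simp
  · have hV2 : 2 ≤ (refChain seg (v ++ [b])).length := by
      rcases v with _ | ⟨x, _ | ⟨y, v⟩⟩
      · exact absurd rfl hv0
      · simp [refChain]
      · have := ref_head (seg := seg) (y :: (v ++ [b]))
        simp only [List.cons_append, refChain]
        cases hh : refChain seg (y :: (v ++ [b])) with
        | nil => simp [hh] at this
        | cons a t => simp; omega
    have hsp := spur' hE (refChain seg (u ++ [b])) (refChain seg (v ++ [b]))
      ((refChain seg (b :: post)).tail) b (ref_isChain h _ hu) (ref_isChain h _ hv)
      (by rw [ref_last hs]; simp) (by rw [ref_last hs]; simp) hV2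
    rw [← ref_append, ← ref_append, ← hR] at hsp
    refine hsp.trans ?_
    rw [List.cons_append, concList_cons _ _ (by simp)]
    unfold chainConc
    obtain ⟨z, hz⟩ : ∃ z, (u ++ [b]).head? = some z := by cases u <;> simp
    rw [hz] at hlast
    obtain ⟨L, hL⟩ := List.getLast?_eq_some_iff.1 hlast
    have hz1 : (refChain seg (u ++ b :: post)).head? = some z := by
      rw [ref_head, ← hz]; cases u <;> simp
    have hz2 := hom.head
    rw [hz1] at hz2
    have e1 := List.cons_head?_tail hz1
    have e2 := List.cons_head?_tail hz2.symm
    have := hom.ctx L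
    rw [← e1, ← e2] at this
    rw [hL]
    simpa [EHomotopic] using this

end Helpers

/-- if `D` is chained, `E ⊆ D`, and the `E`-chains `α`, `β` (same
endpoints) are `D`-homotopic, then `β` is `E`-homotopic to a concatenation
`λ₁*…*λᵣ*α*λᵣ₊₁*…*λₙ` where each `λᵢ` is an `E`-refinement of a `D`-small loop. -/
theorem d_homotopy_factorization (D E : Set (X × X)) (hD : IsChained D)
    (hE : IsEntourage E) (hED : E ⊆ D) (α β : List X)
    (hα : IsEChain E α) (hβ : IsEChain E β)
    (hhead : α.head? = β.head?) (hlast : α.getLast? = β.getLast?)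
    (hhom : EHomotopic D α β) :
    ∃ ls₁ ls₂ : List (List X),
      (∀ l ∈ ls₁ ++ ls₂, IsEChain E l ∧
        ∃ s : List X, IsSmallLoop D s ∧ IsRefinement D E s l) ∧
      (∀ l ∈ ls₁, l.head? = α.head? ∧ l.getLast? = α.head?) ∧
      (∀ l ∈ ls₂, l.head? = α.getLast? ∧ l.getLast? = α.getLast?) ∧
      EHomotopic E β (concList (ls₁ ++ α :: ls₂)) := by
  obtain ⟨seg, hs, hsE, h⟩ := exists_seg D E hD hE hED
  have hDs := hD.1.1
  suffices H : ∀ γ, EHomotopic D α γ → IsEChain D γ ∧ α.head? = γ.head? ∧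
      ∃ ls : List (List X), (∀ l ∈ ls, (IsEChain E l ∧
        ∃ s : List X, IsSmallLoop D s ∧ IsRefinement D E s l) ∧
        l.head? = α.head? ∧ l.getLast? = α.head?) ∧
      EHomotopic E (refChain seg γ) (concList (ls ++ [α])) by
    obtain ⟨-, -, ls, h1, h2⟩ := H β hhom
    refine ⟨ls, [], ?_, fun l hl => (h1 l hl).2, by simp, ?_⟩
    · intro l hl
      exact (h1 l (by simpa using hl)).1
    · rwa [ref_self hsE β hβ.2] at h2
  intro γ hγ
  induction hγ with
  | refl =>
    refine ⟨⟨hα.1, List.IsChain.imp (fun a b hab => hED hab) hα.2⟩, rfl, [], by simp, ?_⟩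
    rw [ref_self hsE α hα.2]
    exact Relation.ReflTransGen.refl
  | tail _ hstep ih =>
    obtain ⟨hch, hhd, ls, hls, hom⟩ := ih
    have hhd' := hhd.trans hstep.head
    cases hstep with
    | insert pre a x b post h1 h2 =>
      obtain ⟨p1, p2⟩ := List.isChain_split.1 hch.2
      obtain ⟨hab, p3⟩ := List.isChain_cons_cons.1 p2
      have hu : IsEChain D ((pre ++ [a]) ++ [b]) := ⟨by simp, by
        simpa [List.Chain'] using List.isChain_split.2
          (⟨p1, by simpa using hab⟩ : _ ∧ List.IsChain (fun a b => (a, b) ∈ D) [a, b])⟩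
      have hv : IsEChain D ((pre ++ [a, x]) ++ [b]) := ⟨by simp, by
        simpa [List.Chain'] using List.isChain_split.2
          (⟨p1, by simpa using ⟨h1, h2⟩⟩ : _ ∧ List.IsChain (fun a b => (a, b) ∈ D) [a, x, b])⟩
      have hsm : IsSmallLoop D ((pre ++ [a, x]) ++ b :: (pre ++ [a]).reverse) :=
        ⟨pre ++ [a], a, x, b, ⟨by simp, p1⟩, by simp, h1, h2, hDs _ hab, by simp [chainConc]⟩
      obtain ⟨l, q1, q2, q3, q4⟩ := core_step hE hs h hDs (pre ++ [a]) (pre ++ [a, x]) b post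
        hu hv (by simp) (by cases pre <;> simp) hsm α ls (by simpa using hom)
      have hh : ((pre ++ [a]) ++ [b]).head? = α.head? := by rw [hhd]; cases pre <;> simp
      rw [hh] at q2 q3
      refine ⟨⟨by simp, List.isChain_split.2 ⟨p1, List.isChain_cons_cons.2 ⟨h1,
        List.isChain_cons_cons.2 ⟨h2, p3⟩⟩⟩⟩, hhd', l :: ls, ?_, by simpa using q4⟩
      intro m hm
      rcases List.mem_cons.1 hm with rfl | hm
      · exact ⟨q1, q2, q3⟩
      · exact hls m hm
    | remove pre a x b post hab =>
      obtain ⟨p1, p2⟩ := List.isChain_split.1 hch.2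
      obtain ⟨h1, p3⟩ := List.isChain_cons_cons.1 p2
      obtain ⟨h2, p3⟩ := List.isChain_cons_cons.1 p3
      have hv : IsEChain D ((pre ++ [a]) ++ [b]) := ⟨by simp, by
        simpa [List.Chain'] using List.isChain_split.2
          (⟨p1, by simpa using hab⟩ : _ ∧ List.IsChain (fun a b => (a, b) ∈ D) [a, b])⟩
      have hu : IsEChain D ((pre ++ [a, x]) ++ [b]) := ⟨by simp, by
        simpa [List.Chain'] using List.isChain_split.2
          (⟨p1, by simpa using ⟨h1, h2⟩⟩ : _ ∧ List.IsChain (fun a b => (a, b) ∈ D) [a, x, b])⟩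
      have hsm : IsSmallLoop D ((pre ++ [a]) ++ b :: (pre ++ [a, x]).reverse) :=
        ⟨pre ++ [a], a, b, x, ⟨by simp, p1⟩, by simp, hab, hDs _ h2, hDs _ h1,
          by simp [chainConc]⟩
      obtain ⟨l, q1, q2, q3, q4⟩ := core_step hE hs h hDs (pre ++ [a, x]) (pre ++ [a]) b post
        hu hv (by simp) (by cases pre <;> simp) hsm α ls (by simpa using hom)
      have hh : ((pre ++ [a, x]) ++ [b]).head? = α.head? := by rw [hhd]; cases pre <;> simp
      rw [hh] at q2 q3
      refine ⟨⟨by simp, List.isChain_split.2 ⟨p1, List.isChain_cons_cons.2 ⟨hab, p3⟩⟩⟩,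
        hhd', l :: ls, ?_, by simpa using q4⟩
      intro m hm
      rcases List.mem_cons.1 hm with rfl | hm
      · exact ⟨q1, q2, q3⟩
      · exact hls m hm
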